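/- The thickness of the complete tripartite graph K_{2,5,5} equals 2. -/

import Mathlib

open SimpleGraph

/-- A simple graph is planar if it admits a drawing in the plane: an injective
placement of vertices and, for each edge, an injective continuous arc joining
the images of its endpoints, such that arcs avoid vertex images in their
interiors and distinct arcs meet only at vertex images. -/
def IsPlanar {V : Type*} (G : SimpleGraph V) : Prop :=
  ∃ (f : V → ℝ × ℝ) (γ : G.edgeSet → (Set.Icc (0:ℝ) 1 → ℝ × ℝ)),
    Function.Injective f ∧
    (∀ e : G.edgeSet, Continuous (γ e)) ∧
    (∀ e : G.edgeSet, ∃ u v : V, (e : Sym2 V) = s(u, v) ∧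
      γ e ⟨0, by norm_num⟩ = f u ∧ γ e ⟨1, by norm_num⟩ = f v) ∧
    (∀ e : G.edgeSet, Function.Injective (γ e)) ∧
    (∀ e : G.edgeSet, ∀ t : Set.Icc (0:ℝ) 1, (t : ℝ) ≠ 0 → (t : ℝ) ≠ 1 →
      ∀ v : V, γ e t ≠ f v) ∧
    (∀ e e' : G.edgeSet, e ≠ e' → ∀ s t : Set.Icc (0:ℝ) 1,
      γ e s = γ e' t → γ e s ∈ Set.range f)

/-- The thickness of a graph: the least `n` such that `G` is the union of `n`
planar subgraphs. -/
noncomputable def thickness {V : Type*} (G : SimpleGraph V) : ℕ :=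
  sInf {n : ℕ | ∃ H : Fin n → SimpleGraph V,
    (∀ i, H i ≤ G) ∧ (∀ i, IsPlanar (H i)) ∧ (⨆ i, H i) = G}

section Lift

theorem exists_clog {A : Type*} [TopologicalSpace A] [SimplyConnectedSpace A]
    [LocallyPathConnectedSpace A] (h : A → ℂ) (hc : Continuous h) (h0 : ∀ x, h x ≠ 0) (x₀ : A) :
    ∃ L : A → ℂ, Continuous L ∧ ∀ x, Complex.exp (L x) = h x := by
  rcases Complex.isCoveringMapOn_exp.existsUnique_continuousMap_lifts
    ⟨h, hc⟩ (a₀ := x₀) (e₀ := Complex.log (h x₀)) (Complex.exp_log (h0 x₀))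
    (fun x ↦ by simpa using h0 x) with ⟨f, ⟨-, hf⟩, -⟩
  exact ⟨f, f.continuous, fun x => by simpa using congrFun hf x⟩

open Classical in
noncomputable def dl (h : ℝ → ℂ) : ℂ :=
  if H : ∃ L : ℝ → ℂ, Continuous L ∧ ∀ t, Complex.exp (L t) = h t then H.choose 1 - H.choose 0
  else 0

theorem lift_diff (L M : ℝ → ℂ) (hL : Continuous L) (hM : Continuous M)
    (h : ∀ t, Complex.exp (L t) = Complex.exp (M t)) : L 1 - L 0 = M 1 - M 0 := by
  have key := Complex.isCoveringMap_exp.eq_of_comp_eq (A := ℝ) (g₁ := L)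
    (g₂ := fun t => M t + (L 0 - M 0)) hL (by fun_prop) (by
      have h0 : Complex.exp (L 0 - M 0) = 1 := by
        rw [Complex.exp_sub, h 0, div_self (Complex.exp_ne_zero _)]
      funext t
      apply Subtype.ext
      simp [Complex.exp_add, h0, h t]) 0 (by simp)
  have := congrFun key 1
  rw [this]; ring

theorem dl_eq (h L : ℝ → ℂ) (hL : Continuous L) (hh : ∀ t, Complex.exp (L t) = h t) :
    dl h = L 1 - L 0 := by
  have H : ∃ L : ℝ → ℂ, Continuous L ∧ ∀ t, Complex.exp (L t) = h t := ⟨L, hL, hh⟩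
  rw [dl, dif_pos H]
  exact lift_diff _ _ H.choose_spec.1 hL (fun t => by rw [H.choose_spec.2, hh])

theorem exp_dl (h : ℝ → ℂ) (hc : Continuous h) (h0 : ∀ t, h t ≠ 0) :
    Complex.exp (dl h) = h 1 / h 0 := by
  obtain ⟨L, hL, hh⟩ := exists_clog h hc h0 0
  rw [dl_eq h L hL hh, Complex.exp_sub, hh, hh]

theorem dl_square (p q : ℝ → ℂ) (hp : Continuous p) (hq : Continuous q)
    (hpq : ∀ s t, p s ≠ q t) :
    dl (fun s => p s - q 0) + dl (fun t => q t - p 1)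
      = dl (fun t => q t - p 0) + dl (fun s => p s - q 1) := by
  obtain ⟨L, hL, hh⟩ := exists_clog (A := ℝ × ℝ) (fun x => p x.1 - q x.2) (by fun_prop)
    (fun x => sub_ne_zero.2 (hpq _ _)) (0, 0)
  rw [dl_eq (fun s => p s - q 0) (fun s => L (s, 0)) (by fun_prop) (fun s => hh (s, 0)),
    dl_eq (fun s => p s - q 1) (fun s => L (s, 1)) (by fun_prop) (fun s => hh (s, 1)),
    dl_eq (fun t => q t - p 0) (fun t => L (0, t) + Real.pi * Complex.I) (by fun_prop)
      (fun t => by rw [Complex.exp_add, hh, Complex.exp_pi_mul_I]; ring),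
    dl_eq (fun t => q t - p 1) (fun t => L (1, t) + Real.pi * Complex.I) (by fun_prop)
      (fun t => by rw [Complex.exp_add, hh, Complex.exp_pi_mul_I]; ring)]
  ring

noncomputable def QQ (a : Fin 3 → ℂ) (i i' : Fin 3) : ℂ :=
  if i < i' then Complex.log (a i - a i') else Complex.log (a i' - a i) + Real.pi * Complex.I

theorem exp_QQ (a : Fin 3 → ℂ) (i i' : Fin 3) (h : a i ≠ a i') :
    Complex.exp (QQ a i i') = a i - a i' := by
  unfold QQ
  split_ifs
  · rw [Complex.exp_log (sub_ne_zero.2 h)]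
  · rw [Complex.exp_add, Complex.exp_log (sub_ne_zero.2 h.symm), Complex.exp_pi_mul_I]; ring

theorem QQ_lt (a : Fin 3 → ℂ) (i i' : Fin 3) (h : i < i') :
    QQ a i' i = QQ a i i' + Real.pi * Complex.I := by
  unfold QQ
  rw [if_neg (by omega), if_pos h]

theorem k33 (a b : Fin 3 → ℂ) (g : Fin 3 → Fin 3 → ℝ → ℂ) (gc : ∀ i j, Continuous (g i j))
    (g0 : ∀ i j, g i j 0 = a i) (g1 : ∀ i j, g i j 1 = b j)
    (dis : ∀ i i' j j', i ≠ i' → j ≠ j' → ∀ s t, g i j s ≠ g i' j' t) : False := by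
  have ex : ∀ i : Fin 3, ∃ j, i ≠ j := by decide
  have haa : ∀ i i', i ≠ i' → a i ≠ a i' := fun i i' h => by
    have := dis i i' 0 1 h (by decide) 0 0
    rwa [g0, g0] at this
  have hbb : ∀ j j', j ≠ j' → b j ≠ b j' := fun j j' h => by
    have := dis 0 1 j j' (by decide) h 1 1
    rwa [g1, g1] at this
  have hba : ∀ j i, b j ≠ a i := fun j i => by
    obtain ⟨i', hi⟩ := ex i
    obtain ⟨j', hj⟩ := ex j
    have := dis i' i j j' hi.symm hj 1 0
    rwa [g0, g1] at this
  have hga : ∀ i j i', i ≠ i' → ∀ t, g i j t ≠ a i' := fun i j i' h t => by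
    obtain ⟨j', hj⟩ := ex j
    have := dis i i' j j' h hj t 0
    rwa [g0] at this
  have hgb : ∀ i j j', j ≠ j' → ∀ t, g i j t ≠ b j' := fun i j j' h t => by
    obtain ⟨i', hi⟩ := ex i
    have := dis i i' j j' hi h t 1
    rwa [g1] at this
  have hA : ∀ i' i j, ∃ n : ℤ, i ≠ i' → dl (fun t => g i j t - a i') =
      Complex.log (b j - a i') - QQ a i i' + n * (2 * Real.pi * Complex.I) := fun i' i j => by
    by_cases h : i = i'
    · exact ⟨0, fun h' => absurd h h'⟩
    · have : Complex.exp (dl (fun t => g i j t - a i')) =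
          Complex.exp (Complex.log (b j - a i') - QQ a i i') := by
        rw [exp_dl (fun t => g i j t - a i') (by have := gc i j; fun_prop) (fun t => sub_ne_zero.2 (hga i j i' h t)),
          Complex.exp_sub, exp_QQ _ _ _ (haa _ _ h), Complex.exp_log (sub_ne_zero.2 (hba _ _)),
          g0, g1]
      obtain ⟨n, hn⟩ := Complex.exp_eq_exp_iff_exists_int.1 this
      exact ⟨n, fun _ => hn⟩
  have hB : ∀ j' i j, ∃ n : ℤ, j ≠ j' → dl (fun t => g i j t - b j') =
      QQ b j j' - (Complex.log (b j' - a i) + Real.pi * Complex.I)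
        + n * (2 * Real.pi * Complex.I) := fun j' i j => by
    by_cases h : j = j'
    · exact ⟨0, fun h' => absurd h h'⟩
    · have : Complex.exp (dl (fun t => g i j t - b j')) =
          Complex.exp (QQ b j j' - (Complex.log (b j' - a i) + Real.pi * Complex.I)) := by
        rw [exp_dl (fun t => g i j t - b j') (by have := gc i j; fun_prop) (fun t => sub_ne_zero.2 (hgb i j j' h t)),
          Complex.exp_sub, exp_QQ _ _ _ (hbb _ _ h), Complex.exp_add,
          Complex.exp_log (sub_ne_zero.2 (hba _ _)), Complex.exp_pi_mul_I,
          g0, g1]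
        congr 1; ring
      obtain ⟨n, hn⟩ := Complex.exp_eq_exp_iff_exists_int.1 this
      exact ⟨n, fun _ => hn⟩
  choose n hn using hA
  choose m hm using hB
  have hpi : (2 * Real.pi * Complex.I : ℂ) ≠ 0 := Complex.two_pi_I_ne_zero
  have rel : ∀ i i' j j', i ≠ i' → j ≠ j' →
      (QQ a i' i - QQ a i i') + (QQ b j' j - QQ b j j') +
      (n i' i j + m j i' j' - n i i' j' - m j' i j) * (2 * Real.pi * Complex.I) = 0 := by
    intro i i' j j' hi hj
    have := dl_square (g i j) (g i' j') (gc _ _) (gc _ _) (dis i i' j j' hi hj)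
    simp only [g0, g1] at this
    rw [hn i' i j hi, hn i i' j' hi.symm, hm j i' j' hj.symm, hm j' i j hj] at this
    linear_combination this
  have r1 : ∀ i i' j j', i < i' → j < j' →
      1 + n i' i j + m j i' j' - n i i' j' - m j' i j = 0 := by
    intro i i' j j' hi hj
    have := rel i i' j j' hi.ne hj.ne
    rw [QQ_lt a i i' hi, QQ_lt b j j' hj] at this
    have h2 : ((1 + n i' i j + m j i' j' - n i i' j' - m j' i j : ℤ) : ℂ)
        * (2 * Real.pi * Complex.I) = 0 := by
      push_cast
      linear_combination this
    exact_mod_cast (mul_eq_zero.1 h2).resolve_right hpi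
  have r2 : ∀ i i' j j', i < i' → j' < j →
      n i' i j + m j i' j' - n i i' j' - m j' i j = 0 := by
    intro i i' j j' hi hj
    have := rel i i' j j' hi.ne hj.ne'
    rw [QQ_lt a i i' hi, QQ_lt b j' j hj] at this
    have h2 : ((n i' i j + m j i' j' - n i i' j' - m j' i j : ℤ) : ℂ)
        * (2 * Real.pi * Complex.I) = 0 := by
      push_cast
      linear_combination this
    exact_mod_cast (mul_eq_zero.1 h2).resolve_right hpi
  have hs : ∀ i i', i < i' →
      (1 + n i' i 0 + m 0 i' 1 - n i i' 1 - m 1 i 0) + (1 + n i' i 0 + m 0 i' 2 - n i i' 2 - m 2 i 0)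
      + (1 + n i' i 1 + m 1 i' 2 - n i i' 2 - m 2 i 1) + (n i' i 1 + m 1 i' 0 - n i i' 0 - m 0 i 1)
      + (n i' i 2 + m 2 i' 0 - n i i' 0 - m 0 i 2) + (n i' i 2 + m 2 i' 1 - n i i' 1 - m 1 i 2) = 0 :=
    fun i i' h => by
      rw [r1 i i' 0 1 h (by decide), r1 i i' 0 2 h (by decide), r1 i i' 1 2 h (by decide),
        r2 i i' 1 0 h (by decide), r2 i i' 2 0 h (by decide), r2 i i' 2 1 h (by decide)]
      rfl
  have h01 := hs 0 1 (by decide)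
  have h02 := hs 0 2 (by decide)
  have h12 := hs 1 2 (by decide)
  omega

end Lift

section Straight

def orr (p q r : ℤ × ℤ) : ℤ := (q.1 - p.1) * (r.2 - p.2) - (q.2 - p.2) * (r.1 - p.1)

def rp (p : ℤ × ℤ) : ℝ × ℝ := ((p.1 : ℝ), (p.2 : ℝ))

def seg (p q : ℤ × ℤ) (t : ℝ) : ℝ × ℝ :=
  ((1 - t) * p.1 + t * q.1, (1 - t) * p.2 + t * q.2)

theorem seg_rev (p q : ℤ × ℤ) (t : ℝ) : seg p q t = seg q p (1 - t) := by
  unfold seg; ext <;> simp <;> ring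

theorem seg_zero (p q : ℤ × ℤ) : seg p q 0 = rp p := by simp [seg, rp]

theorem seg_one (p q : ℤ × ℤ) : seg p q 1 = rp q := by simp [seg, rp]

theorem seg_self (p : ℤ × ℤ) (t : ℝ) : seg p p t = rp p := by
  unfold seg rp; ext <;> simp <;> ring

theorem rp_inj {p q : ℤ × ℤ} (h : rp p = rp q) : p = q := by
  simp only [rp, Prod.mk.injEq, Int.cast_inj] at h
  exact Prod.ext h.1 h.2

theorem seg_meet (p q r r' : ℤ × ℤ) (s t : ℝ) (h : seg p q s = seg r r' t) :
    (1 - t) * (orr p q r : ℝ) + t * orr p q r' = 0 := by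
  simp only [seg, Prod.mk.injEq] at h
  obtain ⟨h1, h2⟩ := h
  unfold orr
  push_cast
  linear_combination ((q.2 : ℝ) - p.2) * h1 - ((q.1 : ℝ) - p.1) * h2

theorem seg_inj (p q : ℤ × ℤ) (hpq : p ≠ q) (s t : ℝ) (h : seg p q s = seg p q t) : s = t := by
  simp only [seg, Prod.mk.injEq] at h
  obtain ⟨h1, h2⟩ := h
  by_contra hst
  apply hpq
  have e1 : (s - t) * ((q.1 : ℝ) - p.1) = 0 := by linear_combination h1
  have e2 : (s - t) * ((q.2 : ℝ) - p.2) = 0 := by linear_combination h2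
  have e1' := (mul_eq_zero.1 e1).resolve_left (sub_ne_zero.2 hst)
  have e2' := (mul_eq_zero.1 e2).resolve_left (sub_ne_zero.2 hst)
  refine Prod.ext ?_ ?_
  · exact_mod_cast (sub_eq_zero.1 e1').symm
  · exact_mod_cast (sub_eq_zero.1 e2').symm

theorem seg_share (p q r : ℤ × ℤ) (h3 : orr p q r ≠ 0) (s t : ℝ)
    (h : seg p q s = seg p r t) : seg p q s = rp p := by
  have := seg_meet _ _ _ _ _ _ h
  have h0 : orr p q p = 0 := by simp [orr]
  have h3' : (orr p q r : ℝ) ≠ 0 := by exact_mod_cast h3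
  rw [h0] at this
  have ht : t = 0 := by simpa [h3'] using this
  rw [h, ht, seg_zero]

theorem same_side (a b t : ℝ) (h0 : 0 ≤ t) (h1 : t ≤ 1) (hab : 0 < a * b)
    (h : (1 - t) * a + t * b = 0) : False := by
  rcases lt_trichotomy a 0 with ha | ha | ha
  · have hb : b < 0 := by by_contra hb; push Not at hb; nlinarith
    rcases h0.eq_or_lt with rfl | h0
    · linarith
    · nlinarith
  · simp [ha] at hab
  · have hb : 0 < b := by by_contra hb; push Not at hb; nlinarith
    rcases h0.eq_or_lt with rfl | h0
    · linarith
    · nlinarith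

theorem planar_of_straight {V : Type*} (G : SimpleGraph V) (p : V → ℤ × ℤ)
    (hp : Function.Injective p)
    (h3 : ∀ u v w, u ≠ v → u ≠ w → v ≠ w → orr (p u) (p v) (p w) ≠ 0)
    (h4 : ∀ u v w x, G.Adj u v → G.Adj w x → u ≠ w → u ≠ x → v ≠ w → v ≠ x →
      0 < orr (p u) (p v) (p w) * orr (p u) (p v) (p x) ∨
      0 < orr (p w) (p x) (p u) * orr (p w) (p x) (p v)) : IsPlanar G := by
  have hex : ∀ e : G.edgeSet, ∃ u v, (e : Sym2 V) = s(u, v) ∧ G.Adj u v := by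
    rintro ⟨e, he⟩
    induction e using Sym2.ind with
    | _ u v => exact ⟨u, v, rfl, he⟩
  choose U W hUW hadj using hex
  have hne : ∀ e, p (U e) ≠ p (W e) := fun e h => (hadj e).ne (hp h)
  refine ⟨fun v => rp (p v), fun e t => seg (p (U e)) (p (W e)) t, ?_, ?_, ?_, ?_, ?_, ?_⟩
  · intro u v h; exact hp (rp_inj h)
  · intro e; unfold seg; fun_prop
  · intro e; exact ⟨U e, W e, hUW e, seg_zero _ _, seg_one _ _⟩
  · intro e s t h; exact Subtype.ext (seg_inj _ _ (hne e) _ _ h)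
  · intro e t ht0 ht1 v h
    simp only at h
    by_cases h1 : v = U e
    · subst h1
      rw [← seg_zero _ (p (W e))] at h
      exact ht0 (seg_inj _ _ (hne e) _ _ h)
    by_cases h2 : v = W e
    · subst h2
      rw [← seg_one (p (U e))] at h
      exact ht1 (seg_inj _ _ (hne e) _ _ h)
    · rw [← seg_self _ 0] at h
      have := seg_meet _ _ _ _ _ _ h
      have h3' := h3 (U e) (W e) v (hadj e).ne (Ne.symm h1) (Ne.symm h2)
      apply h3'
      have : (orr (p (U e)) (p (W e)) (p v) : ℝ) = 0 := by linear_combination this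
      exact_mod_cast this
  · intro e e' hee s t h
    simp only at h ⊢
    have hee' : s(U e, W e) ≠ s(U e', W e') := by
      rw [← hUW, ← hUW]; exact fun h => hee (Subtype.ext h)
    have a1 := (hadj e).ne
    have a2 := (hadj e').ne
    by_cases c1 : U e = U e'
    · refine ⟨U e, (seg_share _ _ _ (h3 (U e) (W e) (W e') a1 (by rw [c1]; exact a2) ?_) s t
        (by rw [h, c1])).symm⟩
      intro c; exact hee' (by rw [c1, c])
    by_cases c2 : U e = W e'
    · refine ⟨U e, (seg_share _ _ _ (h3 (U e) (W e) (U e') a1 c1 ?_) s (1 - t)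
        (by rw [h, c2, seg_rev])).symm⟩
      intro c; exact hee' (by rw [c2, c, Sym2.eq_swap])
    by_cases c3 : W e = U e'
    · rw [seg_rev] at h ⊢
      exact ⟨W e, (seg_share _ _ _ (h3 (W e) (U e) (W e') a1.symm (by rw [c3]; exact a2) c2) _ t
        (by rw [h, c3])).symm⟩
    by_cases c4 : W e = W e'
    · rw [seg_rev, seg_rev (p (U e'))] at h
      rw [seg_rev]
      exact ⟨W e, (seg_share _ _ _ (h3 (W e) (U e) (U e') a1.symm c3 c1) _ (1 - t)
        (by rw [h, c4])).symm⟩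
    exfalso
    rcases h4 _ _ _ _ (hadj e) (hadj e') c1 c2 c3 c4 with H | H
    · exact same_side _ _ t t.2.1 t.2.2 (by exact_mod_cast H) (seg_meet _ _ _ _ _ _ h)
    · exact same_side _ _ s s.2.1 s.2.2 (by exact_mod_cast H) (seg_meet _ _ _ _ _ _ h.symm)

end Straight

section Tables

abbrev VV := (Σ i : Fin 3, (![Fin 2, Fin 5, Fin 5] : Fin 3 → Type) i)

def lab : VV → Fin 12
  | ⟨0, k⟩ => Fin.castLE (by decide) (show Fin 2 from k)
  | ⟨1, k⟩ => Fin.natAdd 2 (Fin.castLE (by decide) (show Fin 5 from k) : Fin 10)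
  | ⟨2, k⟩ => Fin.natAdd 7 (show Fin 5 from k)

def part (k : Fin 12) : Fin 3 := if k.val < 2 then 0 else if k.val < 7 then 1 else 2

theorem part_lab (v : VV) : part (lab v) = v.1 := by
  obtain ⟨i, k⟩ := v
  fin_cases i
  · revert k; change ∀ k : Fin 2, part (lab ⟨0, k⟩) = 0; decide
  · revert k; change ∀ k : Fin 5, part (lab ⟨1, k⟩) = 1; decide
  · revert k; change ∀ k : Fin 5, part (lab ⟨2, k⟩) = 2; decide

theorem lab_inj : Function.Injective lab := by
  rintro ⟨i, a⟩ ⟨j, b⟩ h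
  have hij : i = j := by simpa [part_lab] using congrArg part h
  subst hij
  congr 1
  fin_cases i
  · revert a b; change ∀ a b : Fin 2, lab ⟨0, a⟩ = lab ⟨0, b⟩ → a = b; decide
  · revert a b; change ∀ a b : Fin 5, lab ⟨1, a⟩ = lab ⟨1, b⟩ → a = b; decide
  · revert a b; change ∀ a b : Fin 5, lab ⟨2, a⟩ = lab ⟨2, b⟩ → a = b; decide

def E0 : List (Fin 12 × Fin 12) :=
  [(0, 4), (0, 5), (0, 6), (0, 8), (0, 9), (0, 11), (1, 2), (1, 4), (1, 6), (1, 7), (1, 9), (1, 11),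
   (2, 9), (2, 10), (2, 11), (3, 9), (3, 10), (3, 11), (4, 7), (4, 11), (5, 7), (6, 7), (6, 8)]

def E1 : List (Fin 12 × Fin 12) :=
  [(0, 2), (0, 3), (0, 7), (0, 10), (1, 3), (1, 5), (1, 8), (1, 10), (2, 7), (2, 8), (3, 7), (3, 8),
   (4, 8), (4, 9), (4, 10), (5, 8), (5, 9), (5, 10), (5, 11), (6, 9), (6, 10), (6, 11)]

def P0 : Fin 12 → ℤ × ℤ := ![(3,0),(50,20),(46,20),(21,11),(59,3),(19,40),(25,39),(35,54),(26,15),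
  (40,23),(27,13),(24,5)]

def P1 : Fin 12 → ℤ × ℤ := ![(42,53),(31,41),(54,38),(33,46),(0,3),(39,26),(22,37),(42,30),(51,7),
  (20,7),(19,59),(29,41)]

def HH (E : List (Fin 12 × Fin 12)) : SimpleGraph VV where
  Adj u v := u.1 ≠ v.1 ∧ ((lab u, lab v) ∈ E ∨ (lab v, lab u) ∈ E)
  symm := ⟨fun _ _ h => ⟨h.1.symm, h.2.symm⟩⟩
  loopless := ⟨fun _ h => h.1 rfl⟩

theorem HH_planar (E : List (Fin 12 × Fin 12)) (P : Fin 12 → ℤ × ℤ)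
    (h2 : ∀ u v, P u = P v → u = v)
    (h3 : ∀ u v w, u ≠ v → u ≠ w → v ≠ w → orr (P u) (P v) (P w) ≠ 0)
    (h4 : ∀ e ∈ E, ∀ e' ∈ E, e.1 ≠ e'.1 → e.1 ≠ e'.2 → e.2 ≠ e'.1 → e.2 ≠ e'.2 →
      0 < orr (P e.1) (P e.2) (P e'.1) * orr (P e.1) (P e.2) (P e'.2) ∨
      0 < orr (P e'.1) (P e'.2) (P e.1) * orr (P e'.1) (P e'.2) (P e.2)) : IsPlanar (HH E) := by
  have sw : ∀ p q r, orr q p r = - orr p q r := fun p q r => by unfold orr; ring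
  refine planar_of_straight _ (fun v => P (lab v)) (fun u v h => lab_inj (h2 _ _ h)) ?_ ?_
  · intro u v w a b c
    exact h3 _ _ _ (lab_inj.ne a) (lab_inj.ne b) (lab_inj.ne c)
  · rintro u v w x ⟨-, a⟩ ⟨-, b⟩ c1 c2 c3 c4
    have d1 := lab_inj.ne c1
    have d2 := lab_inj.ne c2
    have d3 := lab_inj.ne c3
    have d4 := lab_inj.ne c4
    rcases a with a | a <;> rcases b with b | b
    · simpa using h4 _ a _ b d1 d2 d3 d4
    · have := h4 _ a _ b d2 d1 d4 d3
      simp only [sw (P (lab w)) (P (lab x)), neg_mul_neg] at this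
      rwa [mul_comm (orr (P (lab u)) (P (lab v)) (P (lab x)))] at this
    · have := h4 _ a _ b d3 d4 d1 d2
      simp only [sw (P (lab u)) (P (lab v)), neg_mul_neg] at this
      rwa [mul_comm (orr (P (lab w)) (P (lab x)) (P (lab v)))] at this
    · have := h4 _ a _ b d4 d3 d2 d1
      simp only [sw (P (lab u)) (P (lab v)), sw (P (lab w)) (P (lab x)), neg_mul_neg] at this
      rwa [mul_comm (orr (P (lab w)) (P (lab x)) (P (lab v))),
        mul_comm (orr (P (lab u)) (P (lab v)) (P (lab x)))] at this

theorem planar0 : IsPlanar (HH E0) :=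
  HH_planar E0 P0 (by decide +kernel) (by decide +kernel) (by decide +kernel)

theorem planar1 : IsPlanar (HH E1) :=
  HH_planar E1 P1 (by decide +kernel) (by decide +kernel) (by decide +kernel)

theorem cover : ∀ u v : Fin 12, part u ≠ part v →
    ((u, v) ∈ E0 ∨ (v, u) ∈ E0) ∨ ((u, v) ∈ E1 ∨ (v, u) ∈ E1) := by
  decide +kernel

end Tables

theorem nonplanar_of_k33 {V : Type*} (G : SimpleGraph V) (a b : Fin 3 → V)
    (ha : Function.Injective a) (hb : Function.Injective b) (hab : ∀ i j, a i ≠ b j)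
    (hG : ∀ i j, G.Adj (a i) (b j)) : ¬ IsPlanar G := by
  rintro ⟨f, γ, hf, hc, hend, -, hav, hmeet⟩
  let φ : (ℝ × ℝ) ≃L[ℝ] ℂ := Complex.equivRealProdCLM.symm
  have key : ∀ i j, ∃ g : ℝ → ℂ, Continuous g ∧ g 0 = φ (f (a i)) ∧ g 1 = φ (f (b j)) ∧
      ∀ t, ∃ s, g t = φ (γ ⟨s(a i, b j), hG i j⟩ s) := by
    intro i j
    obtain ⟨u, v, huv, h0, h1⟩ := hend ⟨s(a i, b j), hG i j⟩
    have c := hc ⟨s(a i, b j), hG i j⟩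
    rcases Sym2.eq_iff.1 huv with ⟨rfl, rfl⟩ | ⟨rfl, rfl⟩
    · refine ⟨fun t => φ (γ ⟨s(a i, b j), hG i j⟩ (Set.projIcc 0 1 zero_le_one t)), ?_, ?_, ?_,
        fun t => ⟨_, rfl⟩⟩
      · exact φ.continuous.comp (c.comp continuous_projIcc)
      · simp only [Set.projIcc_left]; rw [h0]
      · simp only [Set.projIcc_right]; rw [h1]
    · refine ⟨fun t => φ (γ ⟨s(a i, b j), hG i j⟩ (Set.projIcc 0 1 zero_le_one (1 - t))), ?_, ?_, ?_,
        fun t => ⟨_, rfl⟩⟩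
      · exact φ.continuous.comp (c.comp (continuous_projIcc.comp (by fun_prop)))
      · simp only [sub_zero, Set.projIcc_right]; rw [h1]
      · simp only [sub_self, Set.projIcc_left]; rw [h0]
  choose g gc g0 g1 gr using key
  have hvert : ∀ (e : G.edgeSet) (t : Set.Icc (0:ℝ) 1) (w : V), γ e t = f w → w ∈ (e : Sym2 V) := by
    intro e t w h
    obtain ⟨u, v, huv, h0, h1⟩ := hend e
    rw [huv]
    by_cases t0 : (t : ℝ) = 0
    · have : t = ⟨0, by norm_num⟩ := Subtype.ext t0
      rw [this, h0] at h
      rw [hf h]; simp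
    by_cases t1 : (t : ℝ) = 1
    · have : t = ⟨1, by norm_num⟩ := Subtype.ext t1
      rw [this, h1] at h
      rw [hf h]; simp
    · exact absurd h (hav e t t0 t1 w)
  refine k33 (fun i => φ (f (a i))) (fun j => φ (f (b j))) g gc g0 g1 ?_
  intro i i' j j' hi hj s t h
  obtain ⟨s', hs⟩ := gr i j s
  obtain ⟨t', ht⟩ := gr i' j' t
  rw [hs, ht] at h
  have h' := φ.injective h
  have hee : (⟨s(a i, b j), hG i j⟩ : G.edgeSet) ≠ ⟨s(a i', b j'), hG i' j'⟩ := by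
    intro h
    rcases Sym2.eq_iff.1 (congrArg Subtype.val h) with ⟨h1, -⟩ | ⟨h1, -⟩
    · exact hi (ha h1)
    · exact hab _ _ h1
  obtain ⟨w, hw⟩ := hmeet _ _ hee _ _ h'
  have m1 := hvert _ _ w hw.symm
  have m2 := hvert _ _ w (h'.symm.trans hw.symm)
  simp only [Sym2.mem_iff] at m1 m2
  rcases m1 with rfl | rfl <;> rcases m2 with m2 | m2
  · exact hi (ha m2)
  · exact hab _ _ m2
  · exact hab _ _ m2.symm
  · exact hj (hb m2)

theorem thickness_K255 :
    thickness (completeMultipartiteGraph ![Fin 2, Fin 5, Fin 5]) = 2 := by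
  have hadj : ∀ u v : VV, (completeMultipartiteGraph ![Fin 2, Fin 5, Fin 5]).Adj u v ↔ u.1 ≠ v.1 :=
    fun u v => by simp [completeMultipartiteGraph]
  have hnp : ¬ IsPlanar (completeMultipartiteGraph ![Fin 2, Fin 5, Fin 5]) := by
    let c : Fin 3 → Fin 5 := Fin.castLE (by decide)
    have hcinj : Function.Injective c := Fin.castLE_injective _
    refine nonplanar_of_k33 _ (fun i => (⟨1, c i⟩ : VV)) (fun j => (⟨2, c j⟩ : VV)) ?_ ?_ ?_ ?_
    · intro i j h; exact hcinj (eq_of_heq (Sigma.mk.inj h).2)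
    · intro i j h; exact hcinj (eq_of_heq (Sigma.mk.inj h).2)
    · intro i j h
      exact absurd (congrArg Sigma.fst h) (by decide : (1 : Fin 3) ≠ 2)
    · intro i j
      exact (hadj _ _).2 (by decide : (1 : Fin 3) ≠ 2)
  have hmem : 2 ∈ {n : ℕ | ∃ H : Fin n → SimpleGraph VV,
      (∀ i, H i ≤ completeMultipartiteGraph ![Fin 2, Fin 5, Fin 5]) ∧ (∀ i, IsPlanar (H i)) ∧
      (⨆ i, H i) = completeMultipartiteGraph ![Fin 2, Fin 5, Fin 5]} := by
    have hle : ∀ E, HH E ≤ completeMultipartiteGraph ![Fin 2, Fin 5, Fin 5] :=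
      fun E u v h => (hadj u v).2 h.1
    refine ⟨![HH E0, HH E1], ?_, ?_, ?_⟩
    · intro i; fin_cases i
      · exact hle E0
      · exact hle E1
    · intro i; fin_cases i
      · exact planar0
      · exact planar1
    · apply le_antisymm
      · refine iSup_le fun i => ?_
        fin_cases i
        · exact hle E0
        · exact hle E1
      · intro u v h
        have hne := (hadj u v).1 h
        rw [SimpleGraph.iSup_adj]
        rcases cover (lab u) (lab v) (by rwa [part_lab, part_lab]) with h | h
        · exact ⟨0, hne, h⟩
        · exact ⟨1, hne, h⟩
  refine le_antisymm (Nat.sInf_le hmem) ?_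
  refine le_csInf ⟨2, hmem⟩ ?_
  rintro n ⟨H, -, hpl, hsup⟩
  by_contra hn
  have : n = 0 ∨ n = 1 := by omega
  rcases this with rfl | rfl
  · have h : (completeMultipartiteGraph ![Fin 2, Fin 5, Fin 5]).Adj
        (⟨1, (0 : Fin 5)⟩ : VV) (⟨2, (0 : Fin 5)⟩ : VV) :=
      (hadj _ _).2 (by decide : (1 : Fin 3) ≠ 2)
    rw [← hsup, SimpleGraph.iSup_adj] at h
    obtain ⟨i, -⟩ := h
    exact i.elim0
  · apply hnp
    rw [← hsup]
    have : (⨆ i, H i) = H 0 := ciSup_unique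
    rw [this]
    exact hpl 0
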